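/- arXiv:1311.2835 — 2 statements merged into one kernel-verified Lean document; each statement's English description precedes it below -/
import Mathlib

section
/- Let H be a virtually polycyclic group (i.e., H has a polycyclic subgroup of finite index). Then H contains only finitely many conjugacy classes of finite subgroups. -/
/-- A group is polycyclic if it admits a subnormal series with cyclic factors. -/
def IsPolycyclic (G : Type*) [Group G] : Prop :=
  ∃ (n : ℕ) (s : Fin (n + 1) → Subgroup G),
    s 0 = ⊥ ∧ s (Fin.last n) = ⊤ ∧
    ∀ i : Fin n, s i.castSucc ≤ s i.succ ∧
      ∃ _ : ((s i.castSucc).subgroupOf (s i.succ)).Normal,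
        IsCyclic (↥(s i.succ) ⧸ (s i.castSucc).subgroupOf (s i.succ))

/-- A group is virtually polycyclic if it has a polycyclic subgroup of finite index. -/
def IsVirtuallyPolycyclic (G : Type*) [Group G] : Prop :=
  ∃ H : Subgroup G, IsPolycyclic H ∧ H.FiniteIndex

/-!
The derived series of a normal solvable subgroup of finite index reduces the theorem to passing from
`Q` to an extension `G` of `Q` by a finitely generated abelian group `A`. Some power `Aᵉ` is
torsion-free, and `A / Aᵉ` is finite, so `A` may be taken finite or torsion-free. Over a finite
subgroup `J` of `Q`, a finite kernel leaves only finitely many subgroups. If `A` is torsion-free,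
let `n = |J|`: since `A / Aⁿ` is finite, the finite subgroups over `J` have finitely many images in
`G / Aⁿ`, and two of them with the same image differ by the `n`-th power of a 1-cocycle `J → A`.
Averaging over the group shows that such a power is a coboundary, so the two are conjugate.
-/

open scoped IsMulCommutative Pointwise

section FinitelyGenerated

variable {G Q : Type*} [Group G] [Group Q]

theorem fg_map_of_fg {L : Subgroup G} (hL : L.FG) (f : G →* Q) : (L.map f).FG := by
  rw [Subgroup.fg_iff_submonoid_fg] at hL ⊢
  exact hL.map f

theorem fg_of_fg_map_of_injective {f : G →* Q} (hf : Function.Injective f) {L : Subgroup G}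
    (hL : (L.map f).FG) : L.FG := by
  rw [Subgroup.fg_iff_submonoid_fg] at hL ⊢
  exact Submonoid.FG.map_injective f hf hL

theorem fg_of_fg_map_of_fg_inf_ker {f : G →* Q} {L : Subgroup G} (hmap : (L.map f).FG)
    (hker : (L ⊓ f.ker).FG) : L.FG := by
  obtain ⟨T, hT, hTfin⟩ := (Subgroup.fg_iff _).1 hmap
  have hTL : T ⊆ f '' L := Subgroup.closure_le _ |>.1 hT.le
  obtain ⟨S, hSL, hSfin, rfl⟩ :=
    Set.exists_subset_image_finite_and (p := (· = T)).1 ⟨T, hTL, hTfin, rfl⟩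
  have hSfg : (Subgroup.closure S).FG := (Subgroup.fg_iff _).2 ⟨S, rfl, hSfin⟩
  suffices hL : L = Subgroup.closure S ⊔ L ⊓ f.ker from hL ▸ hSfg.sup hker
  refine le_antisymm (fun x hx => ?_) (sup_le ((Subgroup.closure_le _).2 hSL) inf_le_left)
  obtain ⟨y, hy, hyx⟩ : f x ∈ (Subgroup.closure S).map f := by
    rw [MonoidHom.map_closure, hT]
    exact Subgroup.mem_map_of_mem f hx
  have hyxL : y⁻¹ * x ∈ L := L.mul_mem (L.inv_mem ((Subgroup.closure_le _).2 hSL hy)) hx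
  rw [← mul_inv_cancel_left y x]
  exact Subgroup.mul_mem_sup hy ⟨hyxL, (f.eq_iff).1 hyx.symm⟩

theorem fg_of_isCyclic [IsCyclic G] (L : Subgroup G) : L.FG := by
  obtain ⟨g, hg⟩ := (Subgroup.isCyclic_iff_exists_zpowers_eq_top L).1 inferInstance
  exact (Subgroup.fg_iff L).2
    ⟨{g}, by rw [← Subgroup.zpowers_eq_closure, hg], Set.finite_singleton g⟩

end FinitelyGenerated

section PolycyclicGroups

variable {G : Type*} [Group G]

section CyclicStep

variable {M N : Subgroup G} [(M.subgroupOf N).Normal] [IsCyclic (N ⧸ M.subgroupOf N)]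

theorem fg_of_le_of_isCyclic_quotient (hM : ∀ L ≤ M, L.FG) {L : Subgroup G} (hL : L ≤ N) :
    L.FG := by
  have hinf : ((L.subgroupOf N) ⊓ M.subgroupOf N).FG := by
    apply fg_of_fg_map_of_injective N.subtype_injective
    apply hM
    rintro _ ⟨x, hx, rfl⟩
    exact hx.2
  have hLN : (L.subgroupOf N).FG :=
    fg_of_fg_map_of_fg_inf_ker (f := QuotientGroup.mk' (M.subgroupOf N)) (fg_of_isCyclic _)
      (by rwa [QuotientGroup.ker_mk'])
  rw [← Subgroup.map_subgroupOf_eq_of_le hL]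
  exact fg_map_of_fg hLN N.subtype

theorem isSolvable_of_isCyclic_quotient (hMN : M ≤ N) [Group.IsSolvable M] :
    Group.IsSolvable N := by
  have : Group.IsSolvable (N ⧸ M.subgroupOf N) :=
    Group.isSolvable_of_comm mul_comm'
  have : Group.IsSolvable (M.subgroupOf N) :=
    Group.isSolvable_of_isSolvable_injective (f := (Subgroup.subgroupOfEquivOfLe hMN).toMonoidHom)
      (Subgroup.subgroupOfEquivOfLe hMN).injective
  exact (Group.isSolvable_iff_subgroup_quotient (M.subgroupOf N)).2 ⟨inferInstance, inferInstance⟩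

end CyclicStep

theorem IsPolycyclic.fg_subgroup (hG : IsPolycyclic G) (L : Subgroup G) : L.FG := by
  obtain ⟨n, s, hbot, htop, hs⟩ := hG
  have hfg : ∀ i, ∀ L ≤ s i, L.FG := by
    intro i
    induction i using Fin.induction with
    | zero =>
      intro L hL
      rw [le_bot_iff.1 (hL.trans_eq hbot)]
      exact Subgroup.FG.bot
    | succ i ih =>
      obtain ⟨-, hnormal, hcyclic⟩ := hs i
      exact fun L => fg_of_le_of_isCyclic_quotient ih
  exact hfg (Fin.last n) L (htop ▸ le_top)

theorem IsPolycyclic.isSolvable (hG : IsPolycyclic G) : Group.IsSolvable G := by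
  obtain ⟨n, s, hbot, htop, hs⟩ := hG
  have hsolvable : ∀ i, Group.IsSolvable (s i) := by
    intro i
    induction i using Fin.induction with
    | zero => rw [hbot]; infer_instance
    | succ i ih =>
      obtain ⟨hle, hnormal, hcyclic⟩ := hs i
      exact isSolvable_of_isCyclic_quotient hle
  have htopSolvable : Group.IsSolvable (⊤ : Subgroup G) := htop ▸ hsolvable (Fin.last n)
  exact Group.isSolvable_of_surjective (f := (Subgroup.topEquiv (G := G)).toMonoidHom)
    Subgroup.topEquiv.surjective

end PolycyclicGroups

section FiniteUpToConj

/-- A family of subgroups meets only finitely many conjugacy classes: every member is conjugate to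
an element of a fixed finite set, which need not be contained in the family. -/
def FiniteUpToConj {G : Type*} [Group G] (S : Set (Subgroup G)) : Prop :=
  ∃ R : Set (Subgroup G), R.Finite ∧ ∀ K ∈ S, ∃ g : G, MulAut.conj g • K ∈ R

variable {G Q : Type*} [Group G] [Group Q]

theorem map_conj_smul (f : G →* Q) (g : G) (K : Subgroup G) :
    (MulAut.conj g • K).map f = MulAut.conj (f g) • K.map f := by
  change (K.map (MulAut.conj g).toMonoidHom).map f = (K.map f).map (MulAut.conj (f g)).toMonoidHom
  rw [Subgroup.map_map, Subgroup.map_map]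
  congr 1
  ext x
  simp

theorem FiniteUpToConj.of_finite {S : Set (Subgroup G)} (hS : S.Finite) : FiniteUpToConj S :=
  ⟨S, hS, fun K hK => ⟨1, by simpa using hK⟩⟩

theorem FiniteUpToConj.of_finite_image {α : Type*} {S : Set (Subgroup G)} (f : Subgroup G → α)
    (hf : (f '' S).Finite)
    (hconj : ∀ K ∈ S, ∀ L ∈ S, f K = f L → ∃ g : G, MulAut.conj g • K = L) :
    FiniteUpToConj S := by
  obtain ⟨R, hRS, hR, hRf⟩ := Set.exists_subset_image_finite_and (p := (· = f '' S)).1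
    ⟨f '' S, subset_rfl, hf, rfl⟩
  refine ⟨R, hR, fun K hK => ?_⟩
  obtain ⟨L, hL, hLK⟩ : f K ∈ f '' R := hRf ▸ Set.mem_image_of_mem f hK
  obtain ⟨g, hg⟩ := hconj K hK L (hRS hL) hLK.symm
  exact ⟨g, hg ▸ hL⟩

theorem FiniteUpToConj.of_fibers {π : G →* Q} (hπ : Function.Surjective π)
    (hQ : FiniteUpToConj {J : Subgroup Q | Finite J})
    (hfiber : ∀ J : Subgroup Q, Finite J →
      FiniteUpToConj {K : Subgroup G | Finite K ∧ K.map π = J}) :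
    FiniteUpToConj {K : Subgroup G | Finite K} := by
  obtain ⟨R, hR, hRconj⟩ := hQ
  choose! T hT hTconj using hfiber
  refine ⟨⋃ J ∈ R ∩ {J | Finite J}, T J,
    (hR.inter_of_left _).biUnion fun J hJ => hT J hJ.2, fun K (hK : Finite K) => ?_⟩
  obtain ⟨q, hq⟩ := hRconj (K.map π) ((Set.toFinite (K : Set G)).image π)
  obtain ⟨g, rfl⟩ := hπ q
  rw [← map_conj_smul] at hq
  have hgK : Finite (MulAut.conj g • K : Subgroup G) := (Set.toFinite (K : Set G)).image _
  have hmap : Finite ((MulAut.conj g • K).map π) :=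
    (Set.toFinite ((MulAut.conj g • K : Subgroup G) : Set G)).image π
  obtain ⟨h, hh⟩ := hTconj _ hmap (MulAut.conj g • K) ⟨hgK, rfl⟩
  refine ⟨h * g, Set.mem_biUnion ⟨hq, hmap⟩ ?_⟩
  rwa [map_mul, mul_smul]

theorem finite_setOf_le_of_finite (L : Subgroup G) [Finite L] : {K : Subgroup G | K ≤ L}.Finite :=
  (Set.toFinite (L : Set G)).finite_subsets.preimage SetLike.coe_injective.injOn

theorem finite_comap_of_finite_ker (π : G →* Q) [Finite π.ker] (J : Subgroup Q) [Finite J] :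
    Finite (J.comap π) := by
  refine (Set.toFinite (J : Set Q)).preimage' fun q _ => ?_
  by_cases hq : q ∈ Set.range π
  · obtain ⟨g, rfl⟩ := hq
    exact Finite.of_equiv _ (π.fiberEquivKer g).symm
  · rw [Set.preimage_singleton_eq_empty.2 hq]
    exact Set.finite_empty

theorem finite_setOf_map_eq_of_finite_ker (π : G →* Q) [Finite π.ker] (J : Subgroup Q) [Finite J] :
    {K : Subgroup G | K.map π = J}.Finite := by
  have := finite_comap_of_finite_ker π J
  exact (finite_setOf_le_of_finite (J.comap π)).subset fun K hK =>
    Subgroup.map_le_iff_le_comap.1 (le_of_eq hK)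

theorem FiniteUpToConj.of_finite_ker {π : G →* Q} (hπ : Function.Surjective π) [Finite π.ker]
    (hQ : FiniteUpToConj {J : Subgroup Q | Finite J}) :
    FiniteUpToConj {K : Subgroup G | Finite K} :=
  hQ.of_fibers hπ fun J _ =>
    .of_finite ((finite_setOf_map_eq_of_finite_ker π J).subset fun _ hK => hK.2)

end FiniteUpToConj

section PowerSubgroup

/-- The subgroup `Aⁿ` of `n`-th powers of elements of a commutative subgroup `A`. -/
def powerSubgroup {G : Type*} [Group G] (A : Subgroup G) [IsMulCommutative A] (n : ℕ) :
    Subgroup G :=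
  (A.subtype.comp (powMonoidHom n)).range

variable {G : Type*} [Group G] {A : Subgroup G} [IsMulCommutative A] {n : ℕ}

theorem mem_powerSubgroup {x : G} : x ∈ powerSubgroup A n ↔ ∃ a : A, (a : G) ^ n = x :=
  Iff.rfl

theorem powerSubgroup_le : powerSubgroup A n ≤ A := by
  rintro _ ⟨a, rfl⟩
  exact (a ^ n).2

instance [A.Normal] : (powerSubgroup A n).Normal where
  conj_mem := by
    rintro _ ⟨a, rfl⟩ g
    exact mem_powerSubgroup.2 ⟨MulAut.conjNormal g a, by simp⟩

instance : IsMulCommutative (powerSubgroup A n) :=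
  inferInstanceAs (IsMulCommutative (A.subtype.comp (powMonoidHom n)).range)

instance [Group.FG A] : Group.FG (powerSubgroup A n) :=
  inferInstanceAs (Group.FG (A.subtype.comp (powMonoidHom n)).range)

theorem finite_map_mk_powerSubgroup [A.Normal] [Group.FG A] (hn : n ≠ 0) :
    Finite (A.map (QuotientGroup.mk' (powerSubgroup A n))) := by
  have : Group.FG (A.map (QuotientGroup.mk' (powerSubgroup A n))) :=
    (Group.fg_iff_subgroup_fg _).2 (fg_map_of_fg ((Group.fg_iff_subgroup_fg A).1 ‹_›) _)
  apply CommGroup.finite_of_fg_isMulTorsion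
  rintro ⟨_, a, ha, rfl⟩
  refine isOfFinOrder_iff_pow_eq_one.2 ⟨n, hn.bot_lt, Subtype.ext ?_⟩
  exact (QuotientGroup.eq_one_iff (a ^ n)).2 ⟨⟨a, ha⟩, rfl⟩

theorem finite_torsion_of_fg (A : Type*) [CommGroup A] [Group.FG A] :
    Finite (CommGroup.torsion A) := by
  have : Module.Finite ℤ (Additive A) := Module.Finite.iff_addGroup_fg.2 inferInstance
  have hfg : (CommGroup.torsion A).FG := by
    rw [Subgroup.fg_iff_add_fg]
    exact (Submodule.fg_iff_addSubgroup_fg (AddSubgroup.toIntSubmodule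
      (CommGroup.torsion A).toAddSubgroup)).1 (IsNoetherian.noetherian _)
  have : Group.FG (CommGroup.torsion A) := (Group.fg_iff_subgroup_fg _).2 hfg
  exact CommGroup.finite_of_fg_isMulTorsion _ fun t => Submonoid.isOfFinOrder_coe.1 t.2

theorem exists_isMulTorsionFree_powerSubgroup (A : Subgroup G) [IsMulCommutative A] [Group.FG A] :
    ∃ e ≠ 0, IsMulTorsionFree (powerSubgroup A e) := by
  have := finite_torsion_of_fg A
  refine ⟨Nat.card (CommGroup.torsion A), Nat.card_pos.ne', .of_not_isOfFinOrder ?_⟩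
  rintro ⟨_, a, rfl⟩ hne hfin
  have ha : IsOfFinOrder a := by
    have hpow : IsOfFinOrder ((a : G) ^ Nat.card (CommGroup.torsion A)) :=
      Submonoid.isOfFinOrder_coe.2 hfin
    exact Submonoid.isOfFinOrder_coe.1 (hpow.of_pow Nat.card_pos.ne')
  refine hne (Subtype.ext ?_)
  exact congrArg (fun t : CommGroup.torsion A => ((t : A) : G)) (pow_card_eq_one' (x := ⟨a, ha⟩))

end PowerSubgroup

section Averaging

open groupCohomology

theorem isMulCoboundary₁_pow_card {G M : Type*} [Group G] [Finite G] [CommGroup M]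
    [MulDistribMulAction G M] {f : G → M} (hf : IsMulCocycle₁ f) :
    IsMulCoboundary₁ fun g => f g ^ Nat.card G := by
  have := Fintype.ofFinite G
  refine ⟨(∏ h, f h)⁻¹, fun g => ?_⟩
  have hprod : ∏ h, f h = (g • ∏ h, f h) * f g ^ Nat.card G :=
    calc ∏ h, f h = ∏ h, f (g * h) := (Equiv.prod_comp (Equiv.mulLeft g) f).symm
      _ = ∏ h, (g • f h * f g) := by simp only [hf g]
      _ = (g • ∏ h, f h) * f g ^ Nat.card G := by
        rw [Finset.prod_mul_distrib, Finset.smul_prod', Finset.prod_const, Finset.card_univ,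
          Nat.card_eq_fintype_card]
  rw [smul_inv', div_inv_eq_mul, inv_mul_eq_iff_eq_mul]
  exact hprod

end Averaging

section Complements

open groupCohomology

variable {G : Type*} [Group G] {A : Subgroup G}

theorem eq_one_of_mem_of_isMulTorsionFree [IsMulTorsionFree A] {K : Subgroup G} [Finite K] {x : G}
    (hxA : x ∈ A) (hxK : x ∈ K) : x = 1 := by
  have hK : IsOfFinOrder x := Submonoid.isOfFinOrder_coe.2 (isOfFinOrder_of_finite (⟨x, hxK⟩ : K))
  have hA : IsOfFinOrder (⟨x, hxA⟩ : A) := Submonoid.isOfFinOrder_coe.1 hK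
  exact congrArg Subtype.val ((isOfFinOrder_iff_eq_one _).1 hA)

theorem eq_of_mul_mem_of_isMulTorsionFree [IsMulTorsionFree A] {L : Subgroup G} [Finite L]
    {a b : A} {x : G} (ha : (a * x : G) ∈ L) (hb : (b * x : G) ∈ L) : a = b := by
  have hL : (a : G) * (b : G)⁻¹ ∈ L := by
    simpa [mul_assoc] using L.mul_mem ha (L.inv_mem hb)
  have := eq_one_of_mem_of_isMulTorsionFree (A.mul_mem a.2 (A.inv_mem b.2)) hL
  exact Subtype.ext (mul_inv_eq_one.1 this)

theorem card_map_of_isMulTorsionFree_ker {Q : Type*} [Group Q] (π : G →* Q)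
    [IsMulTorsionFree π.ker] (K : Subgroup G) [Finite K] : Nat.card (K.map π) = Nat.card K := by
  have hinj : Set.InjOn π K := fun x hx y hy hxy => by
    have hker : x * y⁻¹ ∈ π.ker := by simp [MonoidHom.mem_ker, hxy]
    exact mul_inv_eq_one.1
      (eq_one_of_mem_of_isMulTorsionFree hker (K.mul_mem hx (K.inv_mem hy)))
  exact Nat.card_image_of_injOn hinj

/-- The conjugation action of a group on a normal subgroup. -/
@[reducible]
def conjMulDistribMulAction (A : Subgroup G) [A.Normal] : MulDistribMulAction G A :=
  MulDistribMulAction.compHom A (MulAut.conjNormal : G →* MulAut A)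

attribute [local instance] conjMulDistribMulAction

theorem coe_conj_smul [A.Normal] (g : G) (a : A) : ((g • a : A) : G) = g * a * g⁻¹ :=
  MulAut.conjNormal_apply g a

variable [A.Normal] [IsMulCommutative A] {K L : Subgroup G}

theorem exists_pow_mul_mem_of_map_mk_le {n : ℕ}
    (hKL : K.map (QuotientGroup.mk' (powerSubgroup A n)) ≤
      L.map (QuotientGroup.mk' (powerSubgroup A n))) {k : G} (hk : k ∈ K) :
    ∃ a : A, (a ^ n * k : G) ∈ L := by
  obtain ⟨l, hl, hlk⟩ := hKL (Subgroup.mem_map_of_mem _ hk)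
  obtain ⟨a, ha⟩ := mem_powerSubgroup.1 (QuotientGroup.eq_iff_div_mem.1 hlk)
  exact ⟨a, by rwa [ha, div_mul_cancel]⟩

variable [IsMulTorsionFree A] [Finite L]

theorem isMulCocycle₁_of_pow_mul_mem {n : ℕ} (hn : n ≠ 0) {c : K → A}
    (hc : ∀ k : K, (c k ^ n * k : G) ∈ L) : IsMulCocycle₁ c := by
  intro k l
  apply pow_left_injective hn
  refine eq_of_mul_mem_of_isMulTorsionFree (x := (k * l : G)) (hc (k * l)) ?_
  convert L.mul_mem (hc k) (hc l) using 1
  have hkl : ((k • c l * c k) ^ n : A) = c k ^ n * (k • c l ^ n) := by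
    rw [mul_pow, mul_comm, smul_pow']
  change (((k • c l * c k) ^ n : A) : G) * _ = _
  rw [hkl]
  simp only [Subgroup.coe_mul, Subgroup.coe_pow, coe_conj_smul, Subgroup.smul_def]
  group

theorem exists_conj_smul_eq_of_map_mk_eq [Finite K]
    (hKL : K.map (QuotientGroup.mk' (powerSubgroup A (Nat.card K))) =
      L.map (QuotientGroup.mk' (powerSubgroup A (Nat.card K)))) :
    ∃ g : G, MulAut.conj g • K = L := by
  choose c hc using fun k : K => exists_pow_mul_mem_of_map_mk_le hKL.le k.2
  obtain ⟨b, hb : ∀ k : K, k • b / b = c k ^ Nat.card K⟩ :=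
    isMulCoboundary₁_pow_card (isMulCocycle₁_of_pow_mul_mem Nat.card_pos.ne' hc)
  have hconj (k : K) : MulAut.conj (b⁻¹ : G) k = c k ^ Nat.card K * k := by
    rw [← Subgroup.coe_pow, ← hb k, div_eq_inv_mul]
    simp [Subgroup.smul_def, coe_conj_smul, mul_assoc]
  refine ⟨b⁻¹, le_antisymm ?_ fun l hl => ?_⟩
  · rintro _ ⟨k, hk, rfl⟩
    exact (hconj ⟨k, hk⟩).symm ▸ hc ⟨k, hk⟩
  · obtain ⟨a, ha⟩ := exists_pow_mul_mem_of_map_mk_le hKL.ge hl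
    have hl' : l = (a⁻¹ ^ Nat.card K : A) * (a ^ Nat.card K * l : G) := by simp
    have hpow : a⁻¹ ^ Nat.card K = c ⟨_, ha⟩ ^ Nat.card K :=
      eq_of_mul_mem_of_isMulTorsionFree (hl' ▸ hl) (hc ⟨_, ha⟩)
    refine ⟨_, ha, (hconj ⟨_, ha⟩).trans ?_⟩
    exact (congrArg (fun x : A => (x : G) * (a ^ Nat.card K * l)) hpow).symm.trans hl'.symm

end Complements

section Extensions

variable {G Q : Type*} [Group G] [Group Q] {π : G →* Q}

theorem FiniteUpToConj.of_isMulTorsionFree_ker (hπ : Function.Surjective π)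
    [IsMulCommutative π.ker] [IsMulTorsionFree π.ker] [Group.FG π.ker]
    (hQ : FiniteUpToConj {J : Subgroup Q | Finite J}) :
    FiniteUpToConj {K : Subgroup G | Finite K} := by
  refine hQ.of_fibers hπ fun J _ => ?_
  let M := powerSubgroup π.ker (Nat.card J)
  let ρ : G ⧸ M →* Q := QuotientGroup.lift M π powerSubgroup_le
  have hρ : Finite ρ.ker := by
    rw [QuotientGroup.ker_lift]
    exact finite_map_mk_powerSubgroup Nat.card_pos.ne'
  refine .of_finite_image (Subgroup.map (QuotientGroup.mk' M))
    ((finite_setOf_map_eq_of_finite_ker ρ J).subset ?_) ?_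
  · rintro _ ⟨K, ⟨-, hKJ⟩, rfl⟩
    exact (Subgroup.map_map K ρ _).trans hKJ
  · rintro K ⟨hK, hKJ⟩ L ⟨hL, -⟩ hKL
    apply exists_conj_smul_eq_of_map_mk_eq (A := π.ker)
    rwa [← card_map_of_isMulTorsionFree_ker π K, hKJ]

theorem FiniteUpToConj.of_isMulCommutative_ker (hπ : Function.Surjective π)
    [IsMulCommutative π.ker] [Group.FG π.ker]
    (hQ : FiniteUpToConj {J : Subgroup Q | Finite J}) :
    FiniteUpToConj {K : Subgroup G | Finite K} := by
  obtain ⟨e, he, htf⟩ := exists_isMulTorsionFree_powerSubgroup π.ker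
  let B := powerSubgroup π.ker e
  let ρ : G ⧸ B →* Q := QuotientGroup.lift B π powerSubgroup_le
  have hρ : Finite ρ.ker := by
    rw [QuotientGroup.ker_lift]
    exact finite_map_mk_powerSubgroup he
  have hB : FiniteUpToConj {K : Subgroup (G ⧸ B) | Finite K} :=
    hQ.of_finite_ker (QuotientGroup.lift_surjective_of_surjective _ _ hπ _)
  have hker : (QuotientGroup.mk' B).ker = B := QuotientGroup.ker_mk' B
  have : IsMulCommutative (QuotientGroup.mk' B).ker := hker.symm ▸ inferInstance
  have : IsMulTorsionFree (QuotientGroup.mk' B).ker := hker.symm ▸ htf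
  have : Group.FG (QuotientGroup.mk' B).ker := hker.symm ▸ inferInstance
  exact hB.of_isMulTorsionFree_ker (QuotientGroup.mk'_surjective B)

theorem FiniteUpToConj.quotient_of_commutator_le {M N : Subgroup G} [M.Normal] [N.Normal]
    (hMN : M ≤ N) (hcomm : ⁅N, N⁆ ≤ M) (hfg : N.FG)
    (hN : FiniteUpToConj {K : Subgroup (G ⧸ N) | Finite K}) :
    FiniteUpToConj {K : Subgroup (G ⧸ M) | Finite K} := by
  let π : G ⧸ M →* G ⧸ N := QuotientGroup.lift M (QuotientGroup.mk' N) (by simpa using hMN)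
  have hker : π.ker = N.map (QuotientGroup.mk' M) := by
    rw [QuotientGroup.ker_lift, QuotientGroup.ker_mk']
  have : IsMulCommutative π.ker := by
    rw [← Subgroup.le_centralizer_iff_isMulCommutative,
      ← Subgroup.commutator_eq_bot_iff_le_centralizer, hker, ← Subgroup.map_commutator,
      Subgroup.map_eq_bot_iff, QuotientGroup.ker_mk']
    exact hcomm
  have : Group.FG π.ker := by
    rw [hker, Group.fg_iff_subgroup_fg]
    exact fg_map_of_fg hfg _
  exact hN.of_isMulCommutative_ker (π := π)
    (QuotientGroup.lift_surjective_of_surjective _ _ (QuotientGroup.mk'_surjective N) _)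

theorem finiteUpToConj_of_isSolvable_of_finiteIndex (N : Subgroup G) [N.Normal]
    [N.FiniteIndex] [Group.IsSolvable N] (hfg : ∀ L ≤ N, L.FG) :
    FiniteUpToConj {K : Subgroup G | Finite K} := by
  let D (i : ℕ) : Subgroup G := (derivedSeries N i).map N.subtype
  have hD (i : ℕ) : FiniteUpToConj {K : Subgroup (G ⧸ D i) | Finite K} := by
    induction i with
    | zero =>
      have hD0 : D 0 = N := by simp [D, ← MonoidHom.range_eq_map]
      have : Finite (G ⧸ D 0) := by rw [hD0]; infer_instance
      exact .of_finite (Set.toFinite _)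
    | succ i ih =>
      refine ih.quotient_of_commutator_le ?_ ?_ (hfg _ (Subgroup.map_subtype_le _))
      · exact Subgroup.map_mono (derivedSeries_antitone N i.le_succ)
      · exact (Subgroup.map_commutator _ _ N.subtype).ge
  obtain ⟨d, hd⟩ := (Group.isSolvable_def N).1 inferInstance
  have hDd : D d = ⊥ := by simp only [D, hd, Subgroup.map_bot]
  have : Finite (QuotientGroup.mk' (D d)).ker := by
    rw [QuotientGroup.ker_mk', hDd]
    infer_instance
  exact (hD d).of_finite_ker (QuotientGroup.mk'_surjective (D d))

end Extensions

/-- A virtually polycyclic group contains only finitely many conjugacy classes of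
finite subgroups. -/
theorem finitely_many_conjugacy_classes_of_finite_subgroups
    (H : Type*) [Group H] (hH : IsVirtuallyPolycyclic H) :
    ∃ R : Finset (Subgroup H), ∀ K : Subgroup H, (K : Set H).Finite →
      ∃ J ∈ R, ∃ h : H, K.map (MulAut.conj h).toMonoidHom = J := by
  obtain ⟨P, hP, hfinite⟩ := hH
  have hsolvable := hP.isSolvable
  have hcore : Group.IsSolvable P.normalCore :=
    Group.isSolvable_of_isSolvable_injective (Subgroup.inclusion_injective P.normalCore_le)
  have hfg : ∀ L ≤ P.normalCore, L.FG := fun L hL => by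
    rw [← Subgroup.map_subgroupOf_eq_of_le (hL.trans P.normalCore_le)]
    exact fg_map_of_fg (hP.fg_subgroup _) P.subtype
  obtain ⟨R, hR, hconj⟩ := finiteUpToConj_of_isSolvable_of_finiteIndex P.normalCore hfg
  refine ⟨hR.toFinset, fun K hK => ?_⟩
  obtain ⟨h, hh⟩ := hconj K hK
  exact ⟨_, hR.mem_toFinset.2 hh, h, rfl⟩
end

section
/- Let A be a subgroup of a virtually polycyclic group H, and let C(A) denote the commensurator of A in H, i.e., the set of g ∈ H such that gAg⁻¹ ∩ A has finite index in both A and gAg⁻¹. If A₀ is the intersection of all conjugates gAg⁻¹ for g ∈ C(A), then A₀ has finite index in A and A₀ is normal in C(A). -/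
/-- The commensurator of a subgroup `A` of `H`: the set of `g` such that
`gAg⁻¹ ∩ A` has finite index in both `A` and `gAg⁻¹`. -/
def commensuratorSet {H : Type*} [Group H] (A : Subgroup H) : Set H :=
  {g : H | ((A ⊓ A.map (MulAut.conj g).toMonoidHom).subgroupOf A).FiniteIndex ∧
    ((A ⊓ A.map (MulAut.conj g).toMonoidHom).subgroupOf
      (A.map (MulAut.conj g).toMonoidHom)).FiniteIndex}

/-!
Two ideas show that, in a virtually polycyclic group, the commensurator `C` of `A` normalizes a
subgroup commensurable with `A`.

* Let `N` be a subgroup all of whose subgroups are finitely generated, `A ≤ N`, and suppose that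
  `C ⊓ N` normalizes some subgroup of `N` commensurable with `A`. The subgroups with this property
  are closed under joins, so there is a greatest one, and by uniqueness it is normalized by
  everything in `C` that normalizes `N`.
* Suppose that `M / N` is abelian, `A ≤ M`, and `C ⊓ M` is finitely generated and normalizes
  `A ⊓ N`. For a generator `s` of `C ⊓ M`, the subgroup `N (A ⊓ sAs⁻¹)` is normalized by `M`, and by
  the modular law it meets `A` and `sAs⁻¹` in the same subgroup. So the intersection of `A` with
  these finitely many subgroups has finite index in `A` and is normalized by `C ⊓ M`.

An induction along a polycyclic series combines the two. If `T` is commensurable with `A` and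
normalized by `C`, then a characteristic subgroup of finite index in `T`, contained in `A`, is
normalized by `C`, hence lies in every conjugate of `A` by `C`.
-/

open Subgroup Subgroup.Commensurable
open scoped Pointwise commutatorElement

section ModularLaw

variable {G : Type*} [Group G] {A B K L N : Subgroup G} {t : G}

theorem inf_sup_eq_inf_sup_of_coe_sup_eq_mul (hLK : L ≤ K)
    (hNL : (↑(N ⊔ L) : Set G) = N * L) : K ⊓ (N ⊔ L) = K ⊓ N ⊔ L := by
  refine le_antisymm ?_ (sup_le (inf_le_inf_left K le_sup_left) (le_inf hLK le_sup_right))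
  rw [← SetLike.coe_subset_coe, coe_inf, hNL, ← inf_mul_assoc _ _ _ hLK, sup_eq_closure_mul]
  exact subset_closure

theorem inf_sup_inf_eq_inf (hAB : A ⊓ N ≤ B) (hN : A ⊓ B ≤ normalizer (N : Set G)) :
    A ⊓ (N ⊔ A ⊓ B) = A ⊓ B := by
  rw [inf_sup_eq_inf_sup_of_coe_sup_eq_mul inf_le_left
    (coe_mul_of_right_le_normalizer_left _ _ hN), sup_eq_right.2 (le_inf inf_le_left hAB)]

theorem inf_eq_inf_of_le_sup_inf (hAB : A ⊓ N = B ⊓ N) (hN : A ⊓ B ≤ normalizer (N : Set G))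
    (hL : L ≤ N ⊔ A ⊓ B) : A ⊓ L = B ⊓ L := by
  have hA : A ⊓ (N ⊔ A ⊓ B) = A ⊓ B := inf_sup_inf_eq_inf (hAB ▸ inf_le_left) hN
  have hB : B ⊓ (N ⊔ A ⊓ B) = A ⊓ B := by
    rw [inf_comm A B] at hN ⊢
    exact inf_sup_inf_eq_inf (hAB ▸ inf_le_left) hN
  rw [← inf_eq_right.2 hL, ← inf_assoc, ← inf_assoc, hA, hB]

theorem exists_mem_eq_inf_sup_zpowers (ht : t ∈ normalizer (N : Set G))
    (hA : A ≤ N ⊔ zpowers t) : ∃ a ∈ A, A = A ⊓ N ⊔ zpowers a := by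
  have hNt : zpowers t ≤ normalizer (N : Set G) := zpowers_le.2 ht
  have hAN : A ≤ normalizer (N : Set G) := hA.trans (sup_le le_normalizer hNt)
  obtain ⟨u, hu⟩ := (Subgroup.isCyclic_iff_exists_zpowers_eq_top _).1
    (isCyclic_of_le (inf_le_right : (N ⊔ A) ⊓ zpowers t ≤ zpowers t))
  have huNA : u ∈ N ⊔ A := (hu.le.trans inf_le_left) (mem_zpowers u)
  rw [← SetLike.mem_coe, coe_mul_of_right_le_normalizer_left _ _ hAN] at huNA
  obtain ⟨n, hn, a, ha, rfl⟩ := huNA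
  have hle : A ≤ N ⊔ zpowers a := calc
    A ≤ (N ⊔ A) ⊓ (zpowers t ⊔ N) := le_inf le_sup_right (sup_comm N _ ▸ hA)
    _ = (N ⊔ A) ⊓ zpowers t ⊔ N := inf_sup_eq_inf_sup_of_coe_sup_eq_mul le_sup_left
      (coe_mul_of_left_le_normalizer_right _ _ hNt)
    _ ≤ N ⊔ zpowers a :=
      sup_le (hu ▸ zpowers_le.2 (mul_mem_sup hn (mem_zpowers a))) le_sup_left
  have haA : zpowers a ≤ A := zpowers_le.2 ha
  refine ⟨a, ha, ?_⟩
  rw [← inf_sup_eq_inf_sup_of_coe_sup_eq_mul haA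
    (coe_mul_of_right_le_normalizer_left _ _ (haA.trans hAN)), inf_eq_left.2 hle]

end ModularLaw

section Commutator

variable {G : Type*} [Group G] {K M N : Subgroup G} {t : G}

theorem le_normalizer_of_commutator_le (hM : ⁅M, M⁆ ≤ N) (hNK : N ≤ K) (hKM : K ≤ M) :
    M ≤ normalizer (K : Set G) :=
  le_normalizer_iff_commutator_le_right.2 <| (commutator_mono le_rfl hKM).trans (hM.trans hNK)

theorem commutator_sup_zpowers_le (ht : t ∈ normalizer (N : Set G)) :
    ⁅N ⊔ zpowers t, N ⊔ zpowers t⁆ ≤ N := by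
  have hNt : zpowers t ≤ normalizer (N : Set G) := zpowers_le.2 ht
  have hconj (k : ℤ) {n : G} (hn : n ∈ N) : t ^ k * n * (t ^ k)⁻¹ ∈ N :=
    le_normalizer_iff.1 hNt _ (zpow_mem_zpowers t k) n hn
  rw [commutator_le]
  intro x hx y hy
  rw [← SetLike.mem_coe, coe_mul_of_right_le_normalizer_left _ _ hNt] at hx hy
  obtain ⟨n, hn, _, ⟨i, rfl⟩, rfl⟩ := hx
  obtain ⟨m, hm, _, ⟨j, rfl⟩, rfl⟩ := hy
  have heq : ⁅n * t ^ i, m * t ^ j⁆ =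
      n * (t ^ i * m * (t ^ i)⁻¹) * (t ^ j * n⁻¹ * (t ^ j)⁻¹) * m⁻¹ := by
    rw [commutatorElement_def]; group
  simp only [heq]
  exact N.mul_mem (N.mul_mem (N.mul_mem hn (hconj i hm)) (hconj j (N.inv_mem hn))) (N.inv_mem hm)

end Commutator

section RelIndex

variable {G : Type*} [Group G] {K L N : Subgroup G} {a : G}

theorem relIndex_sup_ne_zero (hLK : L ≤ K) (hmul : (↑(N ⊔ L) : Set G) = N * L)
    (hKN : K.relIndex N ≠ 0) : K.relIndex (N ⊔ L) ≠ 0 := by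
  rw [relIndex, index_ne_zero_iff_finite] at hKN ⊢
  refine Finite.of_surjective
    (quotientSubgroupOfEmbeddingOfLE K (le_sup_left : N ≤ N ⊔ L)) fun q ↦ ?_
  obtain ⟨⟨x, hx⟩, rfl⟩ := QuotientGroup.mk_surjective q
  rw [← SetLike.mem_coe, hmul] at hx
  obtain ⟨n, hn, l, hl, rfl⟩ := hx
  refine ⟨((⟨n, hn⟩ : N) : N ⧸ K.subgroupOf N), QuotientGroup.eq.2 ?_⟩
  simpa [mem_subgroupOf] using! hLK hl

theorem relIndex_zpowers_ne_zero {k : ℤ} (hk : k ≠ 0) (h : a ^ k ∈ K) :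
    K.relIndex (zpowers a) ≠ 0 := by
  have hle : AddSubgroup.toSubgroup (AddSubgroup.zmultiples k) ≤ K.comap (zpowersHom G a) := by
    rintro _ ⟨j, rfl⟩
    change a ^ (j * k) ∈ K
    exact zpow_mul' a j k ▸ K.zpow_mem h j
  have hindex : (AddSubgroup.toSubgroup (AddSubgroup.zmultiples k)).index ≠ 0 := by
    rw [AddSubgroup.index_toSubgroup, Int.index_zmultiples]
    exact Int.natAbs_ne_zero.2 hk
  rw [← range_zpowersHom, ← index_comap]
  exact fun h0 ↦ hindex (Nat.eq_zero_of_zero_dvd (h0 ▸ index_dvd_of_le hle))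

end RelIndex

section FG

variable {G : Type*} [Group G] {A B N : Subgroup G} {t : G}

theorem fg_of_le_sup_zpowers (hN : ∀ B ≤ N, B.FG) (ht : t ∈ normalizer (N : Set G))
    (hA : A ≤ N ⊔ zpowers t) : A.FG := by
  obtain ⟨a, -, hAa⟩ := exists_mem_eq_inf_sup_zpowers ht hA
  rw [hAa, zpowers_eq_closure]
  exact FG.sup (hN _ inf_le_right) ((Subgroup.fg_iff _).2 ⟨{a}, rfl, Set.finite_singleton a⟩)

theorem fg_of_relIndex_ne_zero (hB : B.FG) (hBA : B ≤ A) (h : B.relIndex A ≠ 0) : A.FG := by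
  have : Finite (A ⧸ B.subgroupOf A) := index_ne_zero_iff_finite.1 h
  let R : Set G := Set.range fun q : A ⧸ B.subgroupOf A ↦ (q.out : G)
  have hA : A = closure R ⊔ B := by
    refine le_antisymm (fun a ha ↦ ?_)
      (sup_le ((closure_le A).2 (Set.range_subset_iff.2 fun q ↦ q.out.2)) hBA)
    let q : A ⧸ B.subgroupOf A := (⟨a, ha⟩ : A)
    have hq : q.out⁻¹ * ⟨a, ha⟩ ∈ B.subgroupOf A :=
      QuotientGroup.eq.1 (QuotientGroup.out_eq' q)
    simpa using mul_mem_sup (subset_closure (Set.mem_range_self q) : (q.out : G) ∈ closure R)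
      (mem_subgroupOf.1 hq)
  rw [hA]
  exact FG.sup ((Subgroup.fg_iff _).2 ⟨R, rfl, Set.finite_range _⟩) hB

theorem sSup_mem_of_fg {F : Set (Subgroup G)} (hF : F.Nonempty) (hsup : SupClosed F)
    (hfg : (sSup F).FG) : sSup F ∈ F := by
  obtain ⟨S, hS⟩ := hfg
  have hdir : DirectedOn (· ≤ ·) F := hsup.directedOn
  obtain ⟨T, hT, hST⟩ : ∃ T ∈ F, (S : Set G) ⊆ T := by
    refine DirectedOn.exists_mem_subset_of_finset_subset_biUnion hF hdir fun x hx ↦ ?_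
    have hx : x ∈ sSup F := hS ▸ subset_closure hx
    simpa using (mem_sSup_of_directedOn hF hdir).1 hx
  have hle : sSup F ≤ T := hS ▸ (closure_le T).2 hST
  rwa [hle.antisymm (le_sSup hT)]

end FG

section Characteristic

variable {G : Type*} [Group G]

theorem finite_monoidHom_of_fg {P : Type*} [Group.FG G] [Group P] [Finite P] :
    Finite (G →* P) := by
  obtain ⟨S, hS, hfin⟩ := Group.fg_iff.1 ‹Group.FG G›
  have := hfin.to_subtype
  refine Finite.of_injective (fun (f : G →* P) (s : S) ↦ f s) fun f g hfg ↦ ?_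
  exact MonoidHom.eq_of_eqOn_dense hS fun s hs ↦ congrFun hfg ⟨s, hs⟩

theorem exists_characteristic_finiteIndex_le [Group.FG G] (K : Subgroup G) [K.FiniteIndex] :
    ∃ V ≤ K, V.Characteristic ∧ V.FiniteIndex := by
  have := finite_monoidHom_of_fg (G := G) (P := Equiv.Perm (G ⧸ K))
  refine ⟨⨅ f : G →* Equiv.Perm (G ⧸ K), f.ker, ?_, ?_, finiteIndex_iInf fun f ↦ inferInstance⟩
  · calc ⨅ f : G →* Equiv.Perm (G ⧸ K), f.ker ≤ (MulAction.toPermHom G (G ⧸ K)).ker := iInf_le _ _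
      _ = K.normalCore := (normalCore_eq_ker K).symm
      _ ≤ K := normalCore_le K
  · refine characteristic_iff_le_comap.2 fun φ x hx ↦ ?_
    simp only [mem_comap, mem_iInf, MonoidHom.mem_ker] at hx ⊢
    exact fun f ↦ hx (f.comp φ.toMonoidHom)

theorem normalizer_le_normalizer_map_subtype_of_characteristic {K : Subgroup G} (V : Subgroup K)
    [hV : V.Characteristic] :
    normalizer (K : Set G) ≤ normalizer (V.map K.subtype : Set G) := by
  rw [le_normalizer_iff]
  rintro g hg _ ⟨v, hv, rfl⟩
  exact ⟨K.normalizerMonoidHom ⟨g, hg⟩ v, characteristic_iff_le_comap.1 hV _ hv, rfl⟩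

end Characteristic

section Commensurable

variable {G : Type*} [Group G] {A B L N : Subgroup G}

theorem fg_of_commensurable (hAB : Commensurable A B) (hA : A.FG) : B.FG := by
  have : Group.FG A := (Group.fg_iff_subgroup_fg A).2 hA
  have : (B.subgroupOf A).FiniteIndex := ⟨hAB.2⟩
  have hinf : (A ⊓ B).FG := by
    rw [inf_comm, ← subgroupOf_map_subtype, ← (B.subgroupOf A).range_subtype,
      ← MonoidHom.range_comp, ← Group.fg_iff_subgroup_fg]
    exact Group.fg_range _
  exact fg_of_relIndex_ne_zero hinf inf_le_right (by rw [inf_relIndex_right]; exact hAB.1)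

theorem commensurable_inf_right (h : Commensurable A B) (N : Subgroup G) :
    Commensurable (A ⊓ N) (B ⊓ N) :=
  ⟨relIndex_inter_ne_zero h.1 N, relIndex_inter_ne_zero h.2 N⟩

theorem commensurable_inf_of_relIndex_ne_zero (h : N.relIndex A ≠ 0) :
    Commensurable A (A ⊓ N) := by
  refine ⟨?_, ?_⟩
  · rw [relIndex_eq_one.2 inf_le_left]; exact one_ne_zero
  · rwa [inf_relIndex_left]

theorem commensurable_sup_of_le_normalizer (h : Commensurable A B)
    (hLA : L ≤ normalizer (A : Set G)) (hLB : L ≤ normalizer (B : Set G)) :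
    Commensurable (A ⊔ L) (B ⊔ L) :=
  ⟨relIndex_sup_ne_zero le_sup_right (coe_mul_of_right_le_normalizer_left _ _ hLB)
      (mt (relIndex_eq_zero_of_le_left le_sup_left) h.1),
    relIndex_sup_ne_zero le_sup_right (coe_mul_of_right_le_normalizer_left _ _ hLA)
      (mt (relIndex_eq_zero_of_le_left le_sup_left) h.2)⟩

theorem normalizer_le_commensurator (T : Subgroup G) :
    normalizer (T : Set G) ≤ commensurator T := fun g hg ↦ by
  rw [commensurator_mem_iff, conjAct_pointwise_smul_iff.2 hg]

theorem commensurator_inf_normalizer_le (A N : Subgroup G) :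
    commensurator A ⊓ normalizer (N : Set G) ≤ commensurator (A ⊓ N) := by
  rintro g ⟨hgA, hgN⟩
  rw [commensurator_mem_iff, smul_inf, conjAct_pointwise_smul_iff.2 hgN]
  exact commensurable_inf_right hgA N

end Commensurable

/-- `E` almost normalizes `A` if it normalizes some subgroup commensurable with `A`. This
depends only on the commensurability class of `A`, which makes it suitable for induction. -/
def AlmostNormalizes {G : Type*} [Group G] (E A : Subgroup G) : Prop :=
  ∃ T : Subgroup G, Commensurable A T ∧ E ≤ normalizer (T : Set G)

namespace AlmostNormalizes

variable {G : Type*} [Group G] {A B E E' N : Subgroup G}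

theorem mono (h : AlmostNormalizes E A) (hE : E' ≤ E) : AlmostNormalizes E' A :=
  let ⟨T, hAT, hET⟩ := h
  ⟨T, hAT, hE.trans hET⟩

theorem of_commensurable (h : AlmostNormalizes E A) (hAB : Commensurable A B) :
    AlmostNormalizes E B :=
  let ⟨T, hAT, hET⟩ := h
  ⟨T, hAB.symm.trans hAT, hET⟩

theorem exists_le (h : AlmostNormalizes E A) (hAN : A ≤ N) (hEN : E ≤ normalizer (N : Set G)) :
    ∃ T ≤ N, Commensurable A T ∧ E ≤ normalizer (T : Set G) := by
  obtain ⟨T, hAT, hET⟩ := h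
  refine ⟨T ⊓ N, inf_le_right, ?_, (le_inf hET hEN).trans inf_normalizer_le_normalizer_inf⟩
  simpa only [inf_eq_left.2 hAN] using commensurable_inf_right hAT N

theorem exists_le_relIndex_ne_zero (h : AlmostNormalizes E A) (hA : A.FG) :
    ∃ V ≤ A, V.relIndex A ≠ 0 ∧ E ≤ normalizer (V : Set G) := by
  obtain ⟨T, hAT, hET⟩ := h
  have : Group.FG T := (Group.fg_iff_subgroup_fg T).2 (fg_of_commensurable hAT hA)
  have : (A.subgroupOf T).FiniteIndex := ⟨hAT.1⟩
  obtain ⟨V, hVA, hVchar, hVindex⟩ := exists_characteristic_finiteIndex_le (A.subgroupOf T)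
  have hVT : (V.map T.subtype).relIndex T ≠ 0 := by
    rw [relIndex, subgroupOf, comap_map_eq_self_of_injective T.subtype_injective]
    exact hVindex.index_ne_zero
  exact ⟨V.map T.subtype, map_le_iff_le_comap.2 hVA, relIndex_ne_zero_trans hVT hAT.2,
    hET.trans (normalizer_le_normalizer_map_subtype_of_characteristic V)⟩

end AlmostNormalizes

section NormalizedCommensurables

variable {G : Type*} [Group G] {A N : Subgroup G}

/-- The subgroups of `N` that are commensurable with `A` and normalized by the commensurator of `A`
in `N`. Its greatest element, when there is one, is a canonical replacement for `A`. -/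
def normalizedCommensurables (A N : Subgroup G) : Set (Subgroup G) :=
  {T | T ≤ N ∧ Commensurable A T ∧ commensurator A ⊓ N ≤ normalizer (T : Set G)}

theorem supClosed_normalizedCommensurables (A N : Subgroup G) :
    SupClosed (normalizedCommensurables A N) := by
  rintro S ⟨hSN, hAS, hS⟩ T ⟨hTN, hAT, hT⟩
  have hTS : T ≤ normalizer (S : Set G) := by
    refine (le_inf ?_ hTN).trans hS
    rw [hAT.eq]
    exact le_normalizer.trans (normalizer_le_commensurator T)
  refine ⟨sup_le hSN hTN, ?_, ?_⟩
  · have hsup := commensurable_sup_of_le_normalizer (hAS.symm.trans hAT) hTS le_normalizer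
    rw [sup_idem] at hsup
    exact hAT.trans hsup.symm
  · exact (le_inf hS hT).trans (normalizer_inf_normalizer_le_normalizer_sup S T)

theorem smul_mem_normalizedCommensurables {g : G}
    (hg : g ∈ commensurator A ⊓ normalizer (N : Set G)) {T : Subgroup G}
    (hT : T ∈ normalizedCommensurables A N) :
    ConjAct.toConjAct g • T ∈ normalizedCommensurables A N := by
  obtain ⟨hTN, hAT, hT⟩ := hT
  have hgN : ConjAct.toConjAct g • N = N := conjAct_pointwise_smul_iff.2 hg.2
  have hgA : ConjAct.toConjAct g • commensurator A = commensurator A :=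
    conjAct_pointwise_smul_iff.2 (le_normalizer hg.1)
  refine ⟨?_, (symm hg.1).trans (hAT.conj _), ?_⟩
  · rw [← hgN]
    exact pointwise_smul_le_pointwise_smul_iff.2 hTN
  · calc commensurator A ⊓ N
        = ConjAct.toConjAct g • (commensurator A ⊓ N) := by rw [smul_inf, hgA, hgN]
      _ ≤ ConjAct.toConjAct g • normalizer (T : Set G) :=
        pointwise_smul_le_pointwise_smul_iff.2 hT
      _ ≤ normalizer ((ConjAct.toConjAct g • T : Subgroup G) : Set G) := le_normalizer_map _

theorem commensurator_inf_normalizer_le_normalizer_sSup (A N : Subgroup G) :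
    commensurator A ⊓ normalizer (N : Set G) ≤
      normalizer ((sSup (normalizedCommensurables A N) : Subgroup G) : Set G) := by
  rw [le_normalizer_iff]
  intro g hg x hx
  have hle : ConjAct.toConjAct g • sSup (normalizedCommensurables A N) ≤
      sSup (normalizedCommensurables A N) := by
    refine pointwise_smul_subset_iff.2 (sSup_le fun T hT ↦ ?_)
    rw [subset_pointwise_smul_iff, inv_inv]
    exact le_sSup (smul_mem_normalizedCommensurables hg hT)
  exact hle (smul_mem_pointwise_smul x _ _ hx)

end NormalizedCommensurables

section Extension

variable {G : Type*} [Group G] {A M N : Subgroup G} {a t : G}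

theorem almostNormalizes_inf_normalizer_of_le (hfg : ∀ B ≤ N, B.FG) (hAN : A ≤ N)
    (h : AlmostNormalizes (commensurator A ⊓ N) A) :
    AlmostNormalizes (commensurator A ⊓ normalizer (N : Set G)) A := by
  obtain ⟨T, hTN, hAT, hT⟩ := h.exists_le hAN (inf_le_right.trans le_normalizer)
  have hmem : sSup (normalizedCommensurables A N) ∈ normalizedCommensurables A N :=
    sSup_mem_of_fg ⟨T, hTN, hAT, hT⟩ (supClosed_normalizedCommensurables A N)
      (hfg _ (sSup_le fun _ hS ↦ hS.1))
  exact ⟨_, hmem.2.1, commensurator_inf_normalizer_le_normalizer_sSup A N⟩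

theorem almostNormalizes_inf_normalizer_of_relIndex_ne_zero (hfg : ∀ B ≤ N, B.FG)
    (hN : ∀ B ≤ N, AlmostNormalizes (commensurator B ⊓ N) B) (hNA : N.relIndex A ≠ 0) :
    AlmostNormalizes (commensurator A ⊓ normalizer (N : Set G)) A := by
  have hA : Commensurable A (A ⊓ N) := commensurable_inf_of_relIndex_ne_zero hNA
  rw [hA.eq]
  exact (almostNormalizes_inf_normalizer_of_le hfg inf_le_right
    (hN _ inf_le_right)).of_commensurable hA.symm

theorem almostNormalizes_of_commutator_le (hMN : ⁅M, M⁆ ≤ N) (hNM : N ≤ M) (hAM : A ≤ M)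
    (hfg : (commensurator A ⊓ M).FG)
    (hAN : commensurator A ⊓ M ≤ normalizer ((A ⊓ N : Subgroup G) : Set G)) :
    AlmostNormalizes (commensurator A ⊓ M) A := by
  obtain ⟨S, hS⟩ := hfg
  have hS_mem (s : S) : (s : G) ∈ commensurator A ⊓ M := hS ▸ subset_closure s.2
  let conjA (s : S) : Subgroup G := ConjAct.toConjAct (s : G) • A
  let L : Subgroup G := ⨅ s, N ⊔ A ⊓ conjA s
  have hL_index : L.relIndex A ≠ 0 := relIndex_iInf_ne_zero fun s ↦
    mt (relIndex_eq_zero_of_le_left le_sup_right) <| by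
      rw [inf_relIndex_left]
      exact (hS_mem s).1.1
  have hN_normalizer : M ≤ normalizer (N : Set G) :=
    le_normalizer_of_commutator_le hMN le_rfl hNM
  have hL_normalizer : M ≤ normalizer (L : Set G) :=
    (le_iInf fun _ ↦ le_normalizer_of_commutator_le hMN le_sup_left
      (sup_le hNM (inf_le_left.trans hAM))).trans (iInf_normalizer_le_normalizer_iInf _)
  refine ⟨A ⊓ L, commensurable_inf_of_relIndex_ne_zero hL_index, ?_⟩
  rw [← hS, closure_le]
  intro s hs
  lift s to S using hs
  have hconjN : conjA s ⊓ N = A ⊓ N := by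
    have hN := conjAct_pointwise_smul_iff.2 (hN_normalizer (hS_mem s).2)
    rw [← conjAct_pointwise_smul_iff.2 (hAN (hS_mem s)), smul_inf, hN]
  rw [SetLike.mem_coe, ← conjAct_pointwise_smul_iff, smul_inf,
    conjAct_pointwise_smul_iff.2 (hL_normalizer (hS_mem s).2)]
  exact (inf_eq_inf_of_le_sup_inf hconjN.symm ((inf_le_left.trans hAM).trans hN_normalizer)
    (iInf_le _ s)).symm

theorem almostNormalizes_sup_zpowers_of_inf_eq_bot (hfg : ∀ B ≤ N, B.FG)
    (ht : t ∈ normalizer (N : Set G)) (hN : ∀ B ≤ N, AlmostNormalizes (commensurator B ⊓ N) B)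
    (hA : A ≤ N ⊔ zpowers t) (ha : a ∈ A) (hAa : A = A ⊓ N ⊔ zpowers a)
    (hNa : N ⊓ zpowers a = ⊥) :
    AlmostNormalizes (commensurator A ⊓ (N ⊔ zpowers t)) A := by
  set M := N ⊔ zpowers t
  have hMN : M ≤ normalizer (N : Set G) := sup_le le_normalizer (zpowers_le.2 ht)
  have hNM : N ≤ M := le_sup_left
  obtain ⟨T, hTN, hAT, hT⟩ := (almostNormalizes_inf_normalizer_of_le hfg inf_le_right
    (hN (A ⊓ N) inf_le_right)).exists_le inf_le_right inf_le_right
  have hMT : commensurator A ⊓ M ≤ normalizer (T : Set G) :=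
    (le_inf ((inf_le_inf_left _ hMN).trans (commensurator_inf_normalizer_le A N))
      (inf_le_right.trans hMN)).trans hT
  have haT : zpowers a ≤ normalizer (T : Set G) := zpowers_le.2 <|
    hMT ⟨normalizer_le_commensurator A (le_normalizer ha), hA ha⟩
  have haAN : zpowers a ≤ normalizer ((A ⊓ N : Subgroup G) : Set G) := zpowers_le.2 <|
    inf_normalizer_le_normalizer_inf ⟨le_normalizer ha, hMN (hA ha)⟩
  have hcomm : Commensurable A (T ⊔ zpowers a) := by
    rw [hAa]
    exact commensurable_sup_of_le_normalizer hAT haAN haT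
  have hinf : (T ⊔ zpowers a) ⊓ N = T := by
    rw [inf_comm, sup_comm, inf_sup_eq_inf_sup_of_coe_sup_eq_mul hTN
      (coe_mul_of_left_le_normalizer_right _ _ haT), hNa, bot_sup_eq]
  refine AlmostNormalizes.of_commensurable ?_ hcomm.symm
  rw [hcomm.eq] at hMT ⊢
  exact almostNormalizes_of_commutator_le (commutator_sup_zpowers_le ht) hNM
    (sup_le (hTN.trans hNM) (zpowers_le.2 (hA ha))) (fg_of_le_sup_zpowers hfg ht inf_le_right)
    (hinf.symm ▸ hMT)

theorem almostNormalizes_sup_zpowers (hfg : ∀ B ≤ N, B.FG)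
    (ht : t ∈ normalizer (N : Set G)) (hN : ∀ B ≤ N, AlmostNormalizes (commensurator B ⊓ N) B)
    (hA : A ≤ N ⊔ zpowers t) :
    AlmostNormalizes (commensurator A ⊓ (N ⊔ zpowers t)) A := by
  have hMN : N ⊔ zpowers t ≤ normalizer (N : Set G) := sup_le le_normalizer (zpowers_le.2 ht)
  obtain ⟨a, ha, hAa⟩ := exists_mem_eq_inf_sup_zpowers ht hA
  by_cases hNa : N ⊓ zpowers a = ⊥
  · exact almostNormalizes_sup_zpowers_of_inf_eq_bot hfg ht hN hA ha hAa hNa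
  have hNA : N.relIndex A ≠ 0 := by
    obtain ⟨_, ⟨hk, k, rfl⟩, hk_ne⟩ := (bot_or_exists_ne_one _).resolve_left hNa
    have hk_zero : k ≠ 0 := by rintro rfl; exact hk_ne (zpow_zero a)
    have haAN : zpowers a ≤ normalizer ((A ⊓ N : Subgroup G) : Set G) := zpowers_le.2 <|
      inf_normalizer_le_normalizer_inf ⟨le_normalizer ha, hMN (hA ha)⟩
    rw [hAa, sup_comm]
    exact relIndex_sup_ne_zero inf_le_right (coe_mul_of_left_le_normalizer_right _ _ haAN)
      (relIndex_zpowers_ne_zero hk_zero hk)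
  exact (almostNormalizes_inf_normalizer_of_relIndex_ne_zero hfg hN hNA).mono
    (inf_le_inf_left _ hMN)

end Extension

theorem exists_sup_zpowers_eq_of_isCyclic_quotient {G : Type*} [Group G] {M N : Subgroup G}
    (hNM : N ≤ M) [hN : (N.subgroupOf M).Normal] [hcyc : IsCyclic (M ⧸ N.subgroupOf M)] :
    ∃ t ∈ normalizer (N : Set G), N ⊔ zpowers t = M := by
  obtain ⟨q, hq⟩ := hcyc
  obtain ⟨t, rfl⟩ := QuotientGroup.mk_surjective q
  refine ⟨t, (normal_subgroupOf_iff_le_normalizer hNM).1 hN t.2,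
    le_antisymm (sup_le hNM (zpowers_le.2 t.2)) fun x hx ↦ ?_⟩
  obtain ⟨k, hk⟩ := hq (⟨x, hx⟩ : M)
  have hmem : (t ^ k)⁻¹ * ⟨x, hx⟩ ∈ N.subgroupOf M := QuotientGroup.eq.1 hk
  rw [sup_comm]
  simpa using mul_mem_sup (zpow_mem_zpowers (t : G) k) (mem_subgroupOf.1 hmem)

namespace IsPolycyclic

variable {G : Type*} [Group G] {P : Subgroup G}

theorem top_induction {p : Subgroup G → Prop} (hG : IsPolycyclic G) (bot : p ⊥)
    (sup_zpowers : ∀ N : Subgroup G, ∀ t ∈ normalizer (N : Set G), p N → p (N ⊔ zpowers t)) :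
    p ⊤ := by
  obtain ⟨n, s, hs_zero, hs_last, hs⟩ := hG
  have hs_all (i : Fin (n + 1)) : p (s i) := by
    induction i using Fin.induction with
    | zero => rwa [hs_zero]
    | succ i ih =>
      obtain ⟨hle, hnormal, hcyclic⟩ := hs i
      obtain ⟨t, ht, hsup⟩ := exists_sup_zpowers_eq_of_isCyclic_quotient hle
      exact hsup ▸ sup_zpowers _ t ht ih
  exact hs_last ▸ hs_all (Fin.last n)

theorem subgroup_induction {p : Subgroup G → Prop} (hP : IsPolycyclic P) (bot : p ⊥)
    (sup_zpowers : ∀ N : Subgroup G, ∀ t ∈ normalizer (N : Set G), p N → p (N ⊔ zpowers t)) :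
    p P := by
  suffices p ((⊤ : Subgroup P).map P.subtype) by
    rwa [← MonoidHom.range_eq_map, range_subtype] at this
  refine hP.top_induction (p := fun N ↦ p (N.map P.subtype)) (by rwa [Subgroup.map_bot])
    fun N t ht hN ↦ ?_
  rw [Subgroup.map_sup, MonoidHom.map_zpowers]
  exact sup_zpowers _ _ (le_normalizer_map P.subtype (mem_map_of_mem _ ht)) hN

theorem fg_of_le (hP : IsPolycyclic P) : ∀ A ≤ P, A.FG :=
  hP.subgroup_induction (p := fun P ↦ ∀ A ≤ P, A.FG) (fun _ hA ↦ le_bot_iff.1 hA ▸ FG.bot)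
    fun _ _ ht hN _ ↦ fg_of_le_sup_zpowers hN ht

theorem almostNormalizes_commensurator_inf (hP : IsPolycyclic P) :
    ∀ A ≤ P, AlmostNormalizes (commensurator A ⊓ P) A := by
  refine hP.subgroup_induction
    (p := fun M ↦ M ≤ P → ∀ A ≤ M, AlmostNormalizes (commensurator A ⊓ M) A)
    (fun _ A _ ↦ ⟨A, .refl A, ?_⟩) (fun N t ht hN hM A hA ↦ ?_) le_rfl
  · rw [inf_bot_eq]
    exact bot_le
  · have hNP : N ≤ P := le_sup_left.trans hM
    exact almostNormalizes_sup_zpowers (fun B hB ↦ hP.fg_of_le B (hB.trans hNP)) ht (hN hNP) hA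

end IsPolycyclic

namespace IsVirtuallyPolycyclic

variable {G : Type*} [Group G]

theorem subgroup_fg (hG : IsVirtuallyPolycyclic G) (A : Subgroup G) : A.FG := by
  obtain ⟨P, hP, hPindex⟩ := hG
  refine fg_of_relIndex_ne_zero (hP.fg_of_le (A ⊓ P) inf_le_right) inf_le_left ?_
  rw [inf_relIndex_left]
  exact (instFiniteIndex_subgroupOf P A).index_ne_zero

theorem almostNormalizes_commensurator (hG : IsVirtuallyPolycyclic G) (A : Subgroup G) :
    AlmostNormalizes (commensurator A) A := by
  have hfg := hG.subgroup_fg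
  obtain ⟨P, hP, hPindex⟩ := hG
  have hcore : ∀ B ≤ P.normalCore, AlmostNormalizes (commensurator B ⊓ P.normalCore) B :=
    fun B hB ↦ (hP.almostNormalizes_commensurator_inf B (hB.trans P.normalCore_le)).mono
      (inf_le_inf_left _ P.normalCore_le)
  have h := almostNormalizes_inf_normalizer_of_relIndex_ne_zero (A := A) (fun B _ ↦ hfg B) hcore
    (instFiniteIndex_subgroupOf P.normalCore A).index_ne_zero
  rwa [normalizer_eq_top, inf_top_eq] at h

end IsVirtuallyPolycyclic

section Conjugates

variable {G : Type*} [Group G] {A C V : Subgroup G}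

theorem mem_iInf_map_conj {x : G} : x ∈ ⨅ g ∈ C, A.map (MulAut.conj g).toMonoidHom ↔
    ∀ g ∈ C, g⁻¹ * x * g ∈ A := by
  simp only [mem_iInf, mem_map_equiv, MulAut.conj_symm_apply]

theorem iInf_map_conj_le (A C : Subgroup G) :
    ⨅ g ∈ C, A.map (MulAut.conj g).toMonoidHom ≤ A := fun x hx ↦ by
  simpa using mem_iInf_map_conj.1 hx 1 C.one_mem

theorem le_iInf_map_conj (hVA : V ≤ A) (hCV : C ≤ normalizer (V : Set G)) :
    V ≤ ⨅ g ∈ C, A.map (MulAut.conj g).toMonoidHom := fun x hx ↦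
  mem_iInf_map_conj.2 fun g hg ↦ hVA <| by
    simpa using le_normalizer_iff.1 hCV g⁻¹ (C.inv_mem hg) x hx

theorem le_normalizer_iInf_map_conj (A C : Subgroup G) :
    C ≤ normalizer ((⨅ g ∈ C, A.map (MulAut.conj g).toMonoidHom : Subgroup G) : Set G) := by
  rw [le_normalizer_iff]
  intro g hg x hx
  rw [mem_iInf_map_conj] at hx ⊢
  intro c hc
  simpa [mul_assoc] using hx (g⁻¹ * c) (C.mul_mem (C.inv_mem hg) hc)

theorem coe_commensurator (A : Subgroup G) : (commensurator A : Set G) = commensuratorSet A := by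
  ext g
  have hconj : ConjAct.toConjAct g • A = A.map (MulAut.conj g).toMonoidHom := rfl
  rw [SetLike.mem_coe, commensurator_mem_iff, hconj, commensuratorSet, Set.mem_ofPred_eq,
    inf_subgroupOf_left, inf_subgroupOf_right, finiteIndex_iff, finiteIndex_iff]
  rfl

end Conjugates

/-- If `A₀` is the intersection of the conjugates `gAg⁻¹` over `g` in the
commensurator of `A`, then `A₀` has finite index in `A` and is normal in the
commensurator. -/
theorem inf_of_commensurator_conjugates
    (H : Type*) [Group H] (hH : IsVirtuallyPolycyclic H) (A : Subgroup H)
    (A₀ : Subgroup H)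
    (hA₀ : A₀ = ⨅ g ∈ commensuratorSet A, A.map (MulAut.conj g).toMonoidHom) :
    A₀ ≤ A ∧ (A₀.subgroupOf A).FiniteIndex ∧
      ∀ g ∈ commensuratorSet A, ∀ x ∈ A₀, g * x * g⁻¹ ∈ A₀ := by
  obtain ⟨V, hVA, hV_index, hCV⟩ :=
    (hH.almostNormalizes_commensurator A).exists_le_relIndex_ne_zero (hH.subgroup_fg A)
  simp only [← coe_commensurator, SetLike.mem_coe] at hA₀ ⊢
  subst hA₀
  have hV_le : V ≤ ⨅ g ∈ commensurator A, A.map (MulAut.conj g).toMonoidHom :=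
    le_iInf_map_conj hVA hCV
  exact ⟨iInf_map_conj_le A _, ⟨mt (relIndex_eq_zero_of_le_left hV_le) hV_index⟩,
    le_normalizer_iff.1 (le_normalizer_iInf_map_conj A _)⟩
end
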